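/- Let σ ≥ 0 and let ν be a σ-finite Borel measure on ℝ concentrated on (−∞,0) with ∫_{(−∞,0)} min(z², |z|) ν(dz) < ∞, whose tail ν̄(x) := ν((−∞,−x]) is regularly varying at infinity with index −α for some α ∈ (1,2), and suppose liminf_{x ↓ 0} x^{β−2} ∫_{(−x,0)} z² ν(dz) > 0 for some β with α ≤ β < 2. For λ ∈ ℝ define Ψ(iλ) := −σ²λ²/2 + ∫_{(−∞,0)} (e^{iλz} − 1 − iλz) ν(dz), and let g : (0,∞) → (0,∞) be regularly varying at infinity with index 1/α with x·ν̄(g(x)) → 1 as x → ∞. Then for every b ∈ ℝ: (i) for all sufficiently large t, the function λ ↦ exp(tΨ(iλ)) is absolutely integrable on ℝ, so p(t,b) := (1/(2π)) ∫_ℝ e^{−ibλ} exp(tΨ(iλ)) dλ is well defined; and (ii) lim_{t → ∞} g(t) · p(t,b) = (Γ(1+1/α)/π) · ((α−1)/Γ(2−α))^{1/α} · sin(π/α). -/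

import Mathlib

open Filter MeasureTheory Set

/-- The characteristic exponent `Ψ(iλ)` of a spectrally negative Lévy process with
drift `m = 0`, Gaussian coefficient `σ` and Lévy measure `ν`. -/
noncomputable def charExponent (σ : ℝ) (ν : MeasureTheory.Measure ℝ) (lam : ℝ) : ℂ :=
  ((-(σ ^ 2 * lam ^ 2) / 2 : ℝ) : ℂ) +
    ∫ z in Iio (0 : ℝ),
      (Complex.exp (Complex.I * lam * z) - 1 - Complex.I * lam * z) ∂ν

/-- The Fourier-inversion density of `X_t` at `b`. -/
noncomputable def fourierDensity (σ : ℝ) (ν : MeasureTheory.Measure ℝ) (t b : ℝ) : ℂ :=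
  ((1 / (2 * Real.pi) : ℝ) : ℂ) *
    ∫ lam : ℝ, Complex.exp (-(Complex.I) * b * lam) * Complex.exp ((t : ℂ) * charExponent σ ν lam)

open Topology

lemma gl_integrable (a : ℝ) (ha : -1 < a) (r : ℂ) (hr : 0 < r.re) :
    IntegrableOn (fun s : ℝ => ((s ^ a : ℝ) : ℂ) * Complex.exp (-(r * s))) (Ioi 0) := by
  have h := integrableOn_rpow_mul_exp_neg_mul_rpow (p := 1) ha one_pos hr
  refine Integrable.mono' h ?_ ?_
  · refine (Measurable.aestronglyMeasurable ?_)
    fun_prop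
  · filter_upwards [ae_restrict_mem measurableSet_Ioi] with s hs
    have hs' : 0 < s := hs
    rw [norm_mul, Complex.norm_real, Complex.norm_exp, Real.norm_of_nonneg (by positivity)]
    simp

lemma gl_formula (a : ℝ) (ha : 0 < a) (r : ℂ) (hr : 0 < r.re) :
    ∫ s in Ioi (0:ℝ), ((s ^ (a - 1) : ℝ) : ℂ) * Complex.exp (-(r * s)) =
      (Real.Gamma a : ℂ) * r ^ (-(a : ℂ)) := by
  set U : Set ℂ := {z | 0 < z.re} with hU
  have hUo : IsOpen U := isOpen_lt continuous_const Complex.continuous_re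
  have hUc : IsPreconnected U := (convex_halfSpace_re_gt 0).isPreconnected
  set F : ℂ → ℂ := fun r => ∫ s in Ioi (0:ℝ), ((s ^ (a - 1) : ℝ) : ℂ) * Complex.exp (-(r * s))
  have hF : DifferentiableOn ℂ F U := by
    intro r₀ hr₀
    have hr₀' : 0 < r₀.re := hr₀
    have hb : IntegrableOn (fun s : ℝ => s ^ a * Real.exp (-(r₀.re / 2) * s ^ (1:ℝ))) (Ioi 0) :=
      integrableOn_rpow_mul_exp_neg_mul_rpow (by linarith) one_pos (by linarith)
    have := hasDerivAt_integral_of_dominated_loc_of_deriv_le (𝕜 := ℂ)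
      (μ := volume.restrict (Ioi (0:ℝ)))
      (F := fun r s => ((s ^ (a - 1) : ℝ) : ℂ) * Complex.exp (-(r * s)))
      (F' := fun r s => ((s ^ (a - 1) : ℝ) : ℂ) * (Complex.exp (-(r * s)) * (-(1 * s))))
      (x₀ := r₀) (s := {z | r₀.re / 2 < z.re})
      (bound := fun s : ℝ => s ^ a * Real.exp (-(r₀.re / 2) * s ^ (1:ℝ)))
      ((isOpen_lt continuous_const Complex.continuous_re).mem_nhds (by
        show r₀.re / 2 < r₀.re
        linarith))
      (Eventually.of_forall fun x => (by fun_prop : Measurable _).aestronglyMeasurable)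
      (gl_integrable (a-1) (by linarith) r₀ hr₀)
      (by fun_prop : Measurable _).aestronglyMeasurable
      ?_ hb ?_
    · exact this.2.differentiableAt.differentiableWithinAt
    · filter_upwards [ae_restrict_mem measurableSet_Ioi] with s hs x hx
      have hs' : 0 < s := hs
      have hx' : r₀.re / 2 < x.re := hx
      rw [norm_mul, norm_mul, norm_neg, Complex.norm_real, Complex.norm_exp,
        Real.norm_of_nonneg (by positivity), Real.rpow_one]
      simp only [one_mul, Complex.norm_real, Real.norm_of_nonneg hs'.le]
      have e1 : s ^ a = s ^ (a - 1) * s := by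
        rw [Real.rpow_sub_one hs'.ne']; field_simp
      have e2 : Real.exp (-(x * s)).re ≤ Real.exp (-(r₀.re / 2) * s) := by
        apply Real.exp_le_exp.2
        simp
        nlinarith
      rw [e1]
      calc _ ≤ s ^ (a-1) * (Real.exp (-(r₀.re / 2) * s) * s) := by gcongr
        _ = _ := by ring
    · refine Eventually.of_forall fun s x hx => ?_
      have h1 : HasDerivAt (fun x : ℂ => -(x * s)) (-(1 * s)) x :=
        ((hasDerivAt_id x).mul_const (s:ℂ)).neg
      exact (h1.cexp).const_mul _
  have hG : DifferentiableOn ℂ (fun r : ℂ => (Real.Gamma a : ℂ) * r ^ (-(a : ℂ))) U := by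
    intro z hz
    have hz' : 0 < z.re := hz
    exact ((differentiableAt_id.cpow_const (Or.inl hz')).const_mul _).differentiableWithinAt
  refine AnalyticOnNhd.eqOn_of_preconnected_of_frequently_eq (z₀ := 1)
    (hF.analyticOnNhd hUo) (hG.analyticOnNhd hUo) hUc (by simp [hU]) ?_ hr
  have ht : Tendsto (fun x : ℝ => (x : ℂ)) (𝓝[>] 1) (𝓝[≠] 1) := by
    refine tendsto_nhdsWithin_iff.2 ⟨?_, ?_⟩
    · exact (Complex.continuous_ofReal.tendsto' 1 1 (by simp)).mono_left nhdsWithin_le_nhds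
    · filter_upwards [self_mem_nhdsWithin] with x hx
      have : (1:ℝ) < x := hx
      simp only [mem_compl_iff, mem_singleton_iff]
      exact_mod_cast this.ne'
  refine ht.frequently (Eventually.frequently ?_)
  filter_upwards [self_mem_nhdsWithin] with x hx
  have hx0 : 0 < x := lt_trans one_pos hx
  have := Real.integral_rpow_mul_exp_neg_mul_Ioi ha hx0
  have h2 : F x = ((∫ t in Ioi (0:ℝ), t ^ (a - 1) * Real.exp (-(x * t)) : ℝ) : ℂ) := by
    rw [← integral_complex_ofReal]
    simp [F]
  rw [h2, this]
  rw [← Complex.ofReal_neg, ← Complex.ofReal_cpow hx0.le, one_div, Real.inv_rpow hx0.le,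
    Real.rpow_neg hx0.le]
  push_cast
  ring

/-- complex version of `∫ exp (-w u^α)`. -/
lemma exp_rpow_formula (α : ℝ) (hα : 0 < α) (w : ℂ) (hw : 0 < w.re) :
    ∫ u in Ioi (0:ℝ), Complex.exp (-(w * ((u ^ α : ℝ) : ℂ))) =
      (Real.Gamma (1 + 1 / α) : ℂ) * w ^ (-((1 / α : ℝ) : ℂ)) := by
  have h1 := integral_comp_rpow_Ioi (fun v : ℝ => Complex.exp (-(w * ((v ^ α : ℝ) : ℂ))))
    (p := 1 / α) (by positivity)
  rw [← h1]
  have h2 : ∀ x ∈ Ioi (0:ℝ), (|1 / α| * x ^ (1 / α - 1)) •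
      Complex.exp (-(w * (((x ^ (1 / α)) ^ α : ℝ) : ℂ))) =
      ((1 / α : ℝ) : ℂ) * (((x ^ (1 / α - 1) : ℝ) : ℂ) * Complex.exp (-(w * x))) := by
    intro x hx
    have hx' : 0 < x := hx
    rw [← Real.rpow_mul hx'.le, one_div_mul_cancel hα.ne', Real.rpow_one, abs_of_pos (by positivity)]
    rw [Complex.real_smul]
    push_cast
    ring
  rw [setIntegral_congr_fun measurableSet_Ioi h2, integral_const_mul, gl_formula _ (by positivity) _ hw,
    add_comm, Real.Gamma_add_one (by positivity)]
  push_cast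
  ring

lemma norm_one_sub_exp_le (r : ℂ) (hr : 0 ≤ r.re) : ‖1 - Complex.exp (-r)‖ ≤ ‖r‖ := by
  have := Convex.norm_image_sub_le_of_norm_hasDerivWithin_le (𝕜 := ℂ)
    (f := fun z => Complex.exp (-z)) (f' := fun z => Complex.exp (-z) * (-1))
    (s := {z | 0 ≤ z.re}) (x := r) (y := 0) (C := 1)
    (fun z _ => ((hasDerivAt_id z).neg.cexp).hasDerivWithinAt) ?_
    (convex_halfSpace_re_ge 0) hr (by simp)
  · simpa using this
  · intro z hz
    have : 0 ≤ z.re := hz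
    simp [Complex.norm_exp, this]

lemma norm_one_sub_exp_le_two (r : ℂ) (hr : 0 ≤ r.re) : ‖1 - Complex.exp (-r)‖ ≤ 2 := by
  refine (norm_sub_le _ _).trans ?_
  have : ‖Complex.exp (-r)‖ ≤ 1 := by simp [Complex.norm_exp, hr]
  simp only [norm_one]
  linarith

/-- dominating function integrable -/
lemma dom_integrable (A B γ₁ γ₂ : ℝ) (h1 : 1 < γ₁) (h2 : γ₂ < 2) :
    IntegrableOn (fun s : ℝ => if s ≤ 1 then A * s ^ (1 - γ₂) else B * s ^ (-γ₁)) (Ioi 0) := by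
  rw [← Ioc_union_Ioi_eq_Ioi (zero_le_one' ℝ)]
  refine IntegrableOn.union ?_ ?_
  · have : IntegrableOn (fun s : ℝ => A * s ^ (1 - γ₂)) (Ioc 0 1) := by
      have := (intervalIntegral.intervalIntegrable_rpow' (a := 0) (b := 1)
        (r := 1 - γ₂) (by linarith)).const_mul A
      rwa [intervalIntegrable_iff_integrableOn_Ioc_of_le zero_le_one] at this
    refine this.congr_fun (fun s hs => ?_) measurableSet_Ioc
    simp [hs.2]
  · have : IntegrableOn (fun s : ℝ => B * s ^ (-γ₁)) (Ioi 1) :=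
      (integrableOn_Ioi_rpow_of_lt (by linarith) one_pos).const_mul B
    refine this.congr_fun (fun s hs => ?_) measurableSet_Ioi
    have : ¬ s ≤ 1 := not_le.2 hs
    simp [this]

lemma J_bound (α : ℝ) (r : ℂ) (hr : 0 ≤ r.re) (s : ℝ) (hs : 0 < s) :
    ‖(1 - Complex.exp (-(r * s))) * ((s ^ (-α) : ℝ) : ℂ)‖ ≤
      if s ≤ 1 then ‖r‖ * s ^ (1 - α) else 2 * s ^ (-α) := by
  have hre : 0 ≤ (r * s).re := by simp; positivity
  rw [norm_mul, Complex.norm_real, Real.norm_of_nonneg (by positivity)]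
  split_ifs with h
  · have h1 := norm_one_sub_exp_le (r * s) hre
    rw [norm_mul, Complex.norm_real, Real.norm_of_nonneg hs.le] at h1
    have e : s ^ (1 - α) = s * s ^ (-α) := by
      rw [sub_eq_add_neg, Real.rpow_add hs, Real.rpow_one]
    rw [e, ← mul_assoc]
    gcongr
  · gcongr
    exact norm_one_sub_exp_le_two _ hre

lemma J_integrable (α : ℝ) (h1 : 1 < α) (h2 : α < 2) (r : ℂ) (hr : 0 ≤ r.re) :
    IntegrableOn (fun s : ℝ => (1 - Complex.exp (-(r * s))) * ((s ^ (-α) : ℝ) : ℂ)) (Ioi 0) := by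
  refine Integrable.mono' (dom_integrable ‖r‖ 2 α α h1 h2) ?_ ?_
  · exact (by fun_prop : Measurable _).aestronglyMeasurable
  · filter_upwards [ae_restrict_mem measurableSet_Ioi] with s hs
    exact J_bound α r hr s hs

lemma J_formula_pos (α : ℝ) (h1 : 1 < α) (h2 : α < 2) (r : ℂ) (hr : 0 < r.re) :
    ∫ s in Ioi (0:ℝ), (1 - Complex.exp (-(r * s))) * ((s ^ (-α) : ℝ) : ℂ) =
      ((Real.Gamma (2 - α) / (α - 1) : ℝ) : ℂ) * r ^ ((α - 1 : ℝ) : ℂ) := by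
  have hr0 : r ≠ 0 := by rintro rfl; simp at hr
  have hα : α - 1 ≠ 0 := by linarith
  have hα' : 1 - α ≠ 0 := by linarith
  have key := integral_Ioi_mul_deriv_eq_deriv_mul (A := ℂ) (a := 0) (a' := 0) (b' := 0)
    (u := fun s : ℝ => 1 - Complex.exp (-(r * s)))
    (u' := fun s : ℝ => r * Complex.exp (-(r * s)))
    (v := fun s : ℝ => ((s ^ (1 - α) / (1 - α) : ℝ) : ℂ))
    (v' := fun s : ℝ => ((s ^ (-α) : ℝ) : ℂ)) ?_ ?_ ?_ ?_ ?_ ?_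
  · rw [key]
    have e : ∀ s ∈ Ioi (0:ℝ), r * Complex.exp (-(r * s)) * ((s ^ (1 - α) / (1 - α) : ℝ) : ℂ)
        = (r / ((1 - α : ℝ) : ℂ)) * (((s ^ ((2 - α) - 1) : ℝ) : ℂ) * Complex.exp (-(r * s))) := by
      intro s hs
      rw [show 2 - α - 1 = 1 - α by ring]
      push_cast
      ring
    rw [setIntegral_congr_fun measurableSet_Ioi e, integral_const_mul,
      gl_formula _ (by linarith) _ hr]
    have e2 : r ^ ((α - 1 : ℝ) : ℂ) = r * r ^ (-((2 - α : ℝ) : ℂ)) := by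
      nth_rewrite 2 [← Complex.cpow_one r]
      rw [← Complex.cpow_add _ _ hr0]
      congr 1
      push_cast; ring
    rw [e2]
    have e3 : ((1 - α : ℝ) : ℂ) = - ((α - 1 : ℝ) : ℂ) := by push_cast; ring
    have e4 : ((α - 1 : ℝ) : ℂ) ≠ 0 := by exact_mod_cast hα
    rw [e3, Complex.ofReal_div]
    field_simp
    ring
  · intro s hs
    have h1 : HasDerivAt (fun x : ℝ => -(r * (x:ℂ))) (-(r * 1)) s :=
      ((Complex.ofRealCLM.hasDerivAt (x := s)).const_mul r).neg
    have h3 := (h1.cexp.const_sub 1).congr_deriv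
      (show -(Complex.exp (-(r * s)) * (-(r * 1))) = r * Complex.exp (-(r * s)) by ring)
    exact h3
  · intro s hs
    have hs' : 0 < s := hs
    have := ((Real.hasDerivAt_rpow_const (p := 1 - α) (Or.inl hs'.ne')).div_const (1 - α)).ofReal_comp
    have h3 : (1 - α) * s ^ (1 - α - 1) / (1 - α) = s ^ (-α) := by
      rw [show 1 - α - 1 = -α by ring]
      field_simp
    rw [h3] at this
    exact this
  · exact J_integrable α h1 h2 r hr.le
  · have := (gl_integrable (1 - α) (by linarith) r hr).const_mul (r / ((1 - α : ℝ) : ℂ))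
    refine IntegrableOn.congr_fun this (fun s hs => ?_) measurableSet_Ioi
    simp only [Pi.mul_apply]
    push_cast
    ring
  · rw [tendsto_zero_iff_norm_tendsto_zero]
    have hlim : Tendsto (fun s : ℝ => ‖r‖ * s ^ (2 - α) / (α - 1)) (𝓝[>] 0) (𝓝 0) := by
      have : Tendsto (fun s : ℝ => s ^ (2 - α)) (𝓝[>] 0) (𝓝 0) :=
        ((Real.continuous_rpow_const (by linarith : 0 ≤ 2 - α)).tendsto' 0 0
          (Real.zero_rpow (by linarith))).mono_left nhdsWithin_le_nhds
      simpa using (this.const_mul ‖r‖).div_const (α - 1)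
    refine squeeze_zero' (Eventually.of_forall fun _ => norm_nonneg _) ?_ hlim
    filter_upwards [self_mem_nhdsWithin] with s hs
    have hs' : 0 < s := hs
    have hre : 0 ≤ (r * s).re := by simp; positivity
    have h1 := norm_one_sub_exp_le (r * s) hre
    rw [norm_mul, Complex.norm_real, Real.norm_of_nonneg hs'.le] at h1
    simp only [Pi.mul_apply]
    rw [norm_mul, Complex.norm_real, norm_div, Real.norm_of_nonneg (by positivity : 0 ≤ s ^ (1 - α)),
      Real.norm_of_nonpos (by linarith : 1 - α ≤ 0), neg_sub]
    have e : s ^ (2 - α) = s * s ^ (1 - α) := by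
      rw [show 2 - α = 1 + (1 - α) by ring, Real.rpow_add hs', Real.rpow_one]
    rw [e, mul_div_assoc', ← mul_assoc]
    have : 0 < α - 1 := by linarith
    gcongr
  · rw [tendsto_zero_iff_norm_tendsto_zero]
    have hlim : Tendsto (fun s : ℝ => 2 * s ^ (-(α - 1)) / (α - 1)) atTop (𝓝 0) := by
      have := tendsto_rpow_neg_atTop (show 0 < α - 1 by linarith)
      simpa using (this.const_mul 2).div_const (α - 1)
    refine squeeze_zero' (Eventually.of_forall fun _ => norm_nonneg _) ?_ hlim
    filter_upwards [eventually_gt_atTop 0] with s hs'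
    have hre : 0 ≤ (r * s).re := by simp; positivity
    have h1 := norm_one_sub_exp_le_two (r * s) hre
    simp only [Pi.mul_apply]
    rw [norm_mul, Complex.norm_real, norm_div, Real.norm_of_nonneg (by positivity : 0 ≤ s ^ (1 - α)),
      Real.norm_of_nonpos (by linarith : 1 - α ≤ 0), neg_sub, mul_div_assoc', neg_sub]
    have : 0 < α - 1 := by linarith
    gcongr

lemma J_formula (α : ℝ) (h1 : 1 < α) (h2 : α < 2) (u : ℝ) (hu : u ≠ 0) :
    ∫ s in Ioi (0:ℝ), (1 - Complex.exp (-((Complex.I * u) * s))) * ((s ^ (-α) : ℝ) : ℂ) =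
      ((Real.Gamma (2 - α) / (α - 1) : ℝ) : ℂ) * (Complex.I * u) ^ ((α - 1 : ℝ) : ℂ) := by
  have hc : Tendsto (fun ε : ℝ => (ε : ℂ) + Complex.I * u) (𝓝[>] 0) (𝓝 (Complex.I * u)) := by
    have : Continuous (fun ε : ℝ => (ε : ℂ) + Complex.I * u) := by fun_prop
    exact (this.tendsto' 0 _ (by simp)).mono_left nhdsWithin_le_nhds
  have hA : Tendsto (fun ε : ℝ => ∫ s in Ioi (0:ℝ),
      (1 - Complex.exp (-(((ε : ℂ) + Complex.I * u) * s))) * ((s ^ (-α) : ℝ) : ℂ)) (𝓝[>] 0)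
      (𝓝 (∫ s in Ioi (0:ℝ), (1 - Complex.exp (-((Complex.I * u) * s))) * ((s ^ (-α) : ℝ) : ℂ))) := by
    refine tendsto_integral_filter_of_dominated_convergence _
      (Eventually.of_forall fun ε => (by fun_prop : Measurable _).aestronglyMeasurable) ?_
      (dom_integrable (1 + |u|) 2 α α h1 h2) ?_
    · filter_upwards [Ioc_mem_nhdsGT (zero_lt_one' ℝ)] with ε hε
      filter_upwards [ae_restrict_mem measurableSet_Ioi] with s hs
      have hs' : 0 < s := hs
      refine (J_bound α _ (by simp [hε.1.le]) s hs).trans ?_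
      have : ‖(ε : ℂ) + Complex.I * u‖ ≤ 1 + |u| := by
        refine (norm_add_le _ _).trans ?_
        simp [abs_of_pos hε.1, hε.2]
      split_ifs
      · gcongr
      · exact le_rfl
    · refine Eventually.of_forall fun s => ?_
      have hcont : Continuous (fun z : ℂ => (1 - Complex.exp (-(z * s))) * ((s ^ (-α) : ℝ) : ℂ)) := by
        fun_prop
      exact (hcont.tendsto _).comp hc
  have hB : Tendsto (fun ε : ℝ => ((Real.Gamma (2 - α) / (α - 1) : ℝ) : ℂ) *
      ((ε : ℂ) + Complex.I * u) ^ ((α - 1 : ℝ) : ℂ)) (𝓝[>] 0)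
      (𝓝 (((Real.Gamma (2 - α) / (α - 1) : ℝ) : ℂ) * (Complex.I * u) ^ ((α - 1 : ℝ) : ℂ))) := by
    refine Tendsto.const_mul _ (Tendsto.cpow hc tendsto_const_nhds ?_)
    right
    simpa using hu
  refine tendsto_nhds_unique hA (hB.congr' ?_)
  filter_upwards [self_mem_nhdsWithin] with ε hε
  rw [J_formula_pos α h1 h2]
  have : 0 < ε := hε
  simpa using this


lemma w_cpow (α K θ : ℝ) (hK : 0 < K) (h1 : -Real.pi < θ) (h2 : θ ≤ Real.pi) :
    ((K : ℂ) * Complex.exp (θ * Complex.I)) ^ (-((1 / α : ℝ) : ℂ)) =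
      ((K ^ (-(1 / α)) : ℝ) : ℂ) * Complex.exp ((-(θ / α) : ℝ) * Complex.I) := by
  have hne : (K : ℂ) * Complex.exp (θ * Complex.I) ≠ 0 :=
    mul_ne_zero (by exact_mod_cast hK.ne') (Complex.exp_ne_zero _)
  rw [Complex.cpow_def_of_ne_zero hne, Complex.log_ofReal_mul hK (Complex.exp_ne_zero _),
    Complex.log_exp (by simpa using h1) (by simpa using h2), Real.rpow_def_of_pos hK,
    Complex.ofReal_exp, ← Complex.exp_add]
  congr 1
  push_cast
  ring

lemma Iu_formula (α K u s θ : ℝ) (hu : 0 < u) (hs : Complex.log (Complex.I * s) = θ * Complex.I)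
    (hs0 : s ≠ 0) :
    (Complex.I * ((s * u : ℝ) : ℂ)) * ((K : ℂ) * (Complex.I * ((s * u : ℝ) : ℂ)) ^ ((α - 1 : ℝ) : ℂ)) =
      (K : ℂ) * Complex.exp ((θ * α : ℝ) * Complex.I) * ((u ^ α : ℝ) : ℂ) := by
  have hI : Complex.I * (s : ℂ) ≠ 0 := mul_ne_zero Complex.I_ne_zero (by exact_mod_cast hs0)
  have hz : Complex.I * ((s * u : ℝ) : ℂ) = (u : ℂ) * (Complex.I * s) := by push_cast; ring
  have hne : (u : ℂ) * (Complex.I * s) ≠ 0 := mul_ne_zero (by exact_mod_cast hu.ne') hI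
  rw [hz]
  have e : (u : ℂ) * (Complex.I * s) * ((K : ℂ) * ((u : ℂ) * (Complex.I * s)) ^ ((α - 1 : ℝ) : ℂ)) =
      K * ((u : ℂ) * (Complex.I * s)) ^ (α : ℂ) := by
    rw [show ((α : ℝ) : ℂ) = 1 + ((α - 1 : ℝ) : ℂ) by push_cast; ring, Complex.cpow_add _ _ hne,
      Complex.cpow_one]
    ring
  rw [e, mul_assoc]
  congr 1
  rw [Complex.cpow_def_of_ne_zero hne, Complex.log_ofReal_mul hu hI, hs, Real.rpow_def_of_pos hu,
    Complex.ofReal_exp, ← Complex.exp_add]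
  congr 1
  push_cast
  ring

lemma half_integral (α K s θ φ : ℝ) (h1 : 1 < α) (hK : 0 < K)
    (hs : Complex.log (Complex.I * s) = θ * Complex.I) (hs0 : s ≠ 0)
    (hφ1 : -(Real.pi / 2) < φ) (hφ2 : φ < Real.pi / 2)
    (hφ : Complex.exp ((θ * α : ℝ) * Complex.I) = - Complex.exp (φ * Complex.I)) :
    IntegrableOn (fun u : ℝ => Complex.exp ((Complex.I * ((s * u : ℝ) : ℂ)) *
      ((K : ℂ) * (Complex.I * ((s * u : ℝ) : ℂ)) ^ ((α - 1 : ℝ) : ℂ)))) (Ioi 0) ∧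
    ∫ u in Ioi (0:ℝ), Complex.exp ((Complex.I * ((s * u : ℝ) : ℂ)) *
      ((K : ℂ) * (Complex.I * ((s * u : ℝ) : ℂ)) ^ ((α - 1 : ℝ) : ℂ))) =
    (Real.Gamma (1 + 1 / α) : ℂ) * (((K ^ (-(1 / α)) : ℝ) : ℂ) *
      Complex.exp ((-(φ / α) : ℝ) * Complex.I)) := by
  set w : ℂ := (K : ℂ) * Complex.exp (φ * Complex.I) with hw
  have hpi := Real.pi_pos
  have hwre : 0 < w.re := by
    rw [hw, Complex.re_ofReal_mul, Complex.exp_ofReal_mul_I_re]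
    exact mul_pos hK (Real.cos_pos_of_mem_Ioo ⟨hφ1, hφ2⟩)
  have e : ∀ u ∈ Ioi (0:ℝ), Complex.exp (-(w * ((u ^ α : ℝ) : ℂ))) =
      Complex.exp ((Complex.I * ((s * u : ℝ) : ℂ)) *
      ((K : ℂ) * (Complex.I * ((s * u : ℝ) : ℂ)) ^ ((α - 1 : ℝ) : ℂ))) := by
    intro u hu
    rw [Iu_formula α K u s θ hu hs hs0, hφ, hw]
    congr 1
    ring
  constructor
  · refine IntegrableOn.congr_fun ?_ e measurableSet_Ioi
    have h := integrableOn_rpow_mul_exp_neg_mul_rpow (p := α) (s := 0) (by norm_num)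
      (by linarith) hwre
    refine Integrable.mono' h ?_ ?_
    · exact (by fun_prop : Measurable _).aestronglyMeasurable
    · refine Eventually.of_forall fun u => ?_
      rw [Complex.norm_exp]
      simp
  · rw [← setIntegral_congr_fun measurableSet_Ioi e, exp_rpow_formula α (by linarith) w hwre,
      w_cpow α K φ hK (by linarith) (by linarith)]

lemma final_integral (α K : ℝ) (h1 : 1 < α) (h2 : α < 2) (hK : 0 < K) :
    ∫ u : ℝ, Complex.exp ((Complex.I * u) *
      ((K : ℂ) * (Complex.I * u) ^ ((α - 1 : ℝ) : ℂ))) =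
    ((2 * Real.Gamma (1 + 1 / α) * K ^ (-(1 / α)) * Real.sin (Real.pi / α) : ℝ) : ℂ) := by
  have hpi := Real.pi_pos
  have hp := half_integral α K 1 (Real.pi / 2) (Real.pi * α / 2 - Real.pi) h1 hK
    (by simp [Complex.log_I]) one_ne_zero (by nlinarith) (by nlinarith) (by
      have : (((Real.pi / 2 * α : ℝ) : ℂ) * Complex.I) =
        ((Real.pi * α / 2 - Real.pi : ℝ) : ℂ) * Complex.I + Real.pi * Complex.I := by
        push_cast; ring
      rw [this, Complex.exp_add, Complex.exp_pi_mul_I]; ring)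
  have hm := half_integral α K (-1) (-(Real.pi / 2)) (-(Real.pi * α / 2 - Real.pi)) h1 hK
    (by simp [Complex.log_neg_I]) (by norm_num) (by nlinarith) (by nlinarith) (by
      have : (((-(Real.pi / 2) * α : ℝ) : ℂ) * Complex.I) =
        ((-(Real.pi * α / 2 - Real.pi) : ℝ) : ℂ) * Complex.I - Real.pi * Complex.I := by
        push_cast; ring
      rw [this, Complex.exp_sub, Complex.exp_pi_mul_I]; ring)
  simp only [one_mul, neg_mul] at hp hm
  set f : ℝ → ℂ := fun u => Complex.exp ((Complex.I * u) *
      ((K : ℂ) * (Complex.I * u) ^ ((α - 1 : ℝ) : ℂ))) with hf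
  have hm1 : IntegrableOn (fun u => f (-u)) (Ioi 0) := hm.1
  have hm2 : IntegrableOn f (Iic 0) := by
    have h3 := (integrableOn_Ici_iff_integrableOn_Ioi (μ := volume) (b := (0:ℝ))
      (f := fun u => f (-u)) (by finiteness)).2 hm1
    have := h3.comp_neg
    simpa using this
  have hsum := intervalIntegral.integral_Iic_add_Ioi hm2 hp.1
  rw [← hsum]
  have := integral_comp_neg_Ioi 0 f
  rw [neg_zero] at this
  rw [← this, hp.2]
  have hm3 := hm.2
  change ∫ u in Ioi (0:ℝ), f (-u) = _ at hm3
  rw [hm3]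
  have hα0 : α ≠ 0 := by linarith
  have hsin : Real.sin (Real.pi / α) = Real.cos (Real.pi / 2 - Real.pi / α) := by
    rw [Real.cos_pi_div_two_sub]
  rw [hsin]
  have e1 : -((Real.pi * α / 2 - Real.pi) / α) = -(Real.pi / 2 - Real.pi / α) := by
    field_simp
  have e2 : -(-(Real.pi * α / 2 - Real.pi) / α) = (Real.pi / 2 - Real.pi / α) := by
    field_simp
  rw [e1, e2]
  push_cast [Complex.cos]
  ring_nf


lemma int_min (ν : Measure ℝ) (hmin : ∫⁻ z, ENNReal.ofReal (min (z ^ 2) |z|) ∂ν ≠ ⊤) :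
    Integrable (fun z : ℝ => min (z ^ 2) |z|) ν := by
  refine ⟨(by fun_prop : Measurable _).aestronglyMeasurable, ?_⟩
  rw [hasFiniteIntegral_iff_ofReal]
  · exact lt_top_iff_ne_top.2 hmin
  · exact Eventually.of_forall fun z => by positivity

lemma tail_lt_top (ν : Measure ℝ) (hI : Integrable (fun z : ℝ => min (z ^ 2) |z|) ν)
    (x : ℝ) (hx : 0 < x) : ν (Iic (-x)) < ⊤ := by
  have hpos : 0 < min (x ^ 2) x := by positivity
  refine lt_of_le_of_lt (measure_mono ?_) (hI.measure_ge_lt_top hpos)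
  intro z hz
  have hz' : z ≤ -x := hz
  have h1 : x ≤ |z| := by rw [abs_of_neg (by linarith)]; linarith
  have h2 : x ^ 2 ≤ z ^ 2 := by nlinarith
  exact min_le_min h2 h1

lemma fubini_tail (ν : Measure ℝ) [SigmaFinite ν]
    (hI : Integrable (fun z : ℝ => min (z ^ 2) |z|) ν) (f : ℝ → ℂ) (hf : Continuous f)
    (M : ℝ) (hM : ∀ y > 0, ‖f y‖ ≤ M * min 1 y) :
    IntegrableOn (fun z => ∫ y in (0:ℝ)..(-z), f y) (Iio 0) ν ∧
    IntegrableOn (fun y : ℝ => f y * ((ν (Iic (-y))).toReal : ℂ)) (Ioi 0) ∧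
    ∫ z in Iio (0:ℝ), (∫ y in (0:ℝ)..(-z), f y) ∂ν =
      ∫ y in Ioi (0:ℝ), f y * ((ν (Iic (-y))).toReal : ℂ) := by
  set H : ℝ × ℝ → ℂ := fun p => if p.2 ≤ -p.1 then f p.2 else 0 with hH
  have hM0 : 0 ≤ M := by
    have := (norm_nonneg _).trans (hM 1 one_pos)
    simpa using this
  have hmeas : Measurable H := by
    refine Measurable.ite ?_ (by fun_prop) measurable_const
    exact measurableSet_le (by fun_prop) (by fun_prop)
  have hy : ∀ z : ℝ, (fun y => H (z, y)) = (Iic (-z)).indicator f := by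
    intro z; ext y
    simp [hH, indicator]
  have hyn : ∀ z : ℝ, (fun y => ‖H (z, y)‖) = (Iic (-z)).indicator (fun y => ‖f y‖) := by
    intro z; ext y
    simp only [hH, indicator, mem_Iic]
    split_ifs <;> simp
  have hset : ∀ z : ℝ, Ioi (0:ℝ) ∩ Iic (-z) = Ioc 0 (-z) := fun z => Ioi_inter_Iic
  have hInt : Integrable H ((ν.restrict (Iio 0)).prod (volume.restrict (Ioi 0))) := by
    rw [integrable_prod_iff hmeas.aestronglyMeasurable]
    constructor
    · refine Eventually.of_forall fun z => ?_
      rw [hy, integrable_indicator_iff measurableSet_Iic, IntegrableOn,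
        Measure.restrict_restrict measurableSet_Iic, inter_comm, hset]
      exact (hf.integrableOn_Icc).mono_set Ioc_subset_Icc_self
    · refine Integrable.mono' ((hI.const_mul M).restrict (s := Iio 0)) ?_ ?_
      · exact (hmeas.norm.aestronglyMeasurable).integral_prod_right'
      · filter_upwards [ae_restrict_mem measurableSet_Iio] with z hz
        have hz' : z < 0 := hz
        rw [hyn, setIntegral_indicator measurableSet_Iic, hset]
        have := norm_setIntegral_le_of_norm_le_const (μ := volume) (s := Ioc 0 (-z))
          (f := fun y => ‖f y‖) (C := M * min 1 (-z)) (by simp) (fun y hy => by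
            rw [norm_norm]
            refine (hM y hy.1).trans ?_
            gcongr
            exact hy.2)
        refine this.trans (le_of_eq ?_)
        rw [Real.volume_real_Ioc_of_le (by linarith), abs_of_neg hz', mul_assoc,
          min_mul_of_nonneg _ _ (by linarith)]
        rw [min_comm]
        congr 2 <;> ring
  have hz : ∀ y ∈ Ioi (0:ℝ), ∫ z in Iio (0:ℝ), H (z, y) ∂ν = f y * ((ν (Iic (-y))).toReal : ℂ) := by
    intro y hy0
    have hy0' : 0 < y := hy0
    have hss : Iic (-y) ∩ Iio 0 = Iic (-y) :=
      inter_eq_left.2 (fun z hz => lt_of_le_of_lt (mem_Iic.1 hz) (by linarith))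
    have : (fun z => H (z, y)) = (Iic (-y)).indicator (fun _ => f y) := by
      ext z
      simp only [hH, indicator, mem_Iic]
      by_cases h : y ≤ -z
      · rw [if_pos h, if_pos (by linarith)]
      · rw [if_neg h, if_neg (by intro h'; exact h (by linarith))]
    rw [this, integral_indicator_const _ measurableSet_Iic, measureReal_def,
      Measure.restrict_apply measurableSet_Iic,
      hss, Complex.real_smul, mul_comm]
  have hzy : ∀ z ∈ Iio (0:ℝ), ∫ y in Ioi (0:ℝ), H (z, y) = ∫ y in (0:ℝ)..(-z), f y := by
    intro z hz0
    have hz0' : z < 0 := hz0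
    rw [hy, setIntegral_indicator measurableSet_Iic, hset,
      intervalIntegral.integral_of_le (by linarith)]
  refine ⟨?_, ?_, ?_⟩
  · exact IntegrableOn.congr_fun hInt.integral_prod_left hzy measurableSet_Iio
  · exact IntegrableOn.congr_fun hInt.integral_prod_right hz measurableSet_Ioi
  · have := integral_integral_swap (f := fun z y => H (z, y)) hInt
    rw [setIntegral_congr_fun measurableSet_Ioi hz] at this
    rw [← this]
    exact (setIntegral_congr_fun measurableSet_Iio hzy).symm

lemma kernel_bound (l y : ℝ) (hy : 0 < y) :
    ‖(Complex.I * l) * (1 - Complex.exp (-((Complex.I * l) * y)))‖ ≤ l ^ 2 * y := by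
  have h1 := norm_one_sub_exp_le ((Complex.I * l) * y) (by simp)
  rw [norm_mul]
  simp only [norm_mul, Complex.norm_I, one_mul, Complex.norm_real, Real.norm_eq_abs,
    abs_of_pos hy] at h1 ⊢
  rw [← sq_abs]
  nlinarith [abs_nonneg l]

lemma kernel_bound2 (l y : ℝ) :
    ‖(Complex.I * l) * (1 - Complex.exp (-((Complex.I * l) * y)))‖ ≤ 2 * |l| := by
  have h2 := norm_one_sub_exp_le_two ((Complex.I * l) * y) (by simp)
  rw [norm_mul]
  simp only [norm_mul, Complex.norm_I, one_mul, Complex.norm_real, Real.norm_eq_abs] at h2 ⊢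
  nlinarith [abs_nonneg l]

lemma psi_repr (ν : Measure ℝ) [SigmaFinite ν]
    (hI : Integrable (fun z : ℝ => min (z ^ 2) |z|) ν) (l : ℝ) :
    IntegrableOn (fun z : ℝ => Complex.exp (Complex.I * l * z) - 1 - Complex.I * l * z) (Iio 0) ν ∧
    IntegrableOn (fun y : ℝ => (Complex.I * l) * (1 - Complex.exp (-((Complex.I * l) * y))) *
      ((ν (Iic (-y))).toReal : ℂ)) (Ioi 0) ∧
    ∫ z in Iio (0 : ℝ), (Complex.exp (Complex.I * l * z) - 1 - Complex.I * l * z) ∂ν =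
    ∫ y in Ioi (0:ℝ), (Complex.I * l) * (1 - Complex.exp (-((Complex.I * l) * y))) *
      ((ν (Iic (-y))).toReal : ℂ) := by
  have := fubini_tail ν hI
    (fun y : ℝ => (Complex.I * l) * (1 - Complex.exp (-((Complex.I * l) * y)))) (by fun_prop)
    (2 * |l| + l ^ 2) (by
      intro y hy
      have h1 := kernel_bound l y hy
      have h2 := kernel_bound2 l y
      have h3 : 0 ≤ 2 * |l| := by positivity
      have h4 : 0 ≤ l ^ 2 := by positivity
      rcases le_total 1 y with h | h
      · rw [min_eq_left h]; linarith
      · rw [min_eq_right h]; nlinarith)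
  have hd : ∀ y : ℝ, HasDerivAt (fun y : ℝ => Complex.I * l * (y:ℂ) + Complex.exp (-((Complex.I * l) * y)))
      ((Complex.I * l) * (1 - Complex.exp (-((Complex.I * l) * y)))) y := by
    intro y
    have h0 : HasDerivAt (fun x : ℝ => (Complex.I * l) * (x:ℂ)) ((Complex.I * l) * 1) y :=
      (Complex.ofRealCLM.hasDerivAt (x := y)).const_mul _
    exact (h0.add h0.neg.cexp).congr_deriv (by
      simp only [Pi.neg_apply]; ring)
  have he : (fun z : ℝ => ∫ y in (0:ℝ)..(-z),
      (Complex.I * l) * (1 - Complex.exp (-((Complex.I * l) * y)))) =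
      fun z : ℝ => Complex.exp (Complex.I * l * z) - 1 - Complex.I * l * z := by
    ext z
    rw [intervalIntegral.integral_eq_sub_of_hasDerivAt (fun y _ => hd y)
      ((by fun_prop : Continuous _).intervalIntegrable _ _)]
    simp
    ring
  rw [he] at this
  exact this


lemma potter_iter_up (N : ℝ → ℝ) (y₀ q : ℝ) (hy₀ : 0 < y₀) (hq : 0 ≤ q)
    (h : ∀ y ≥ y₀, N (2 * y) ≤ q * N y) (n : ℕ) : ∀ y ≥ y₀, N (2 ^ n * y) ≤ q ^ n * N y := by
  induction n with
  | zero => intro y _; simp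
  | succ k ih =>
    intro y hy
    have h1 : y₀ ≤ 2 ^ k * y := by
      have : (1:ℝ) ≤ 2 ^ k := one_le_pow₀ (by norm_num)
      nlinarith
    have h2 := h _ h1
    have h3 := mul_le_mul_of_nonneg_left (ih y hy) hq
    rw [pow_succ', mul_assoc, pow_succ', mul_assoc]
    exact h2.trans h3

lemma potter_iter_low (N : ℝ → ℝ) (y₀ q : ℝ) (hy₀ : 0 < y₀) (hq : 0 ≤ q)
    (h : ∀ y ≥ y₀, q * N y ≤ N (2 * y)) (n : ℕ) : ∀ y ≥ y₀, q ^ n * N y ≤ N (2 ^ n * y) := by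
  induction n with
  | zero => intro y _; simp
  | succ k ih =>
    intro y hy
    have h1 : y₀ ≤ 2 ^ k * y := by
      have : (1:ℝ) ≤ 2 ^ k := one_le_pow₀ (by norm_num)
      nlinarith
    have h2 := h _ h1
    have h3 := mul_le_mul_of_nonneg_left (ih y hy) hq
    rw [pow_succ', mul_assoc, pow_succ', mul_assoc]
    exact h3.trans h2

lemma potter_up (N : ℝ → ℝ) (y₀ γ : ℝ) (hy₀ : 0 < y₀) (hγ : 0 ≤ γ)
    (hanti : ∀ x y, 0 < x → x ≤ y → N y ≤ N x) (hpos : ∀ x > 0, 0 < N x)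
    (h : ∀ y ≥ y₀, N (2 * y) ≤ 2 ^ (-γ) * N y) :
    ∀ y ≥ y₀, ∀ x ≥ y, N x ≤ 2 ^ γ * (x / y) ^ (-γ) * N y := by
  intro y hy x hx
  have hy0 : 0 < y := by linarith
  obtain ⟨n, hn1, hn2⟩ := exists_nat_pow_near (x := x / y) (y := 2)
    ((one_le_div hy0).2 hx) (by norm_num)
  have h1 := potter_iter_up N y₀ _ hy₀ (by positivity) h n y hy
  have h2 : N x ≤ N (2 ^ n * y) :=
    hanti _ _ (by positivity) ((le_div_iff₀ hy0).1 hn1)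
  refine (h2.trans h1).trans ?_
  have := (hpos y hy0).le
  gcongr
  rw [Real.rpow_pow_comm (by norm_num)]
  have h3 : ((2:ℝ) ^ (n + 1)) ^ (-γ) ≤ (x / y) ^ (-γ) :=
    Real.rpow_le_rpow_of_nonpos (by have : 0 < x := by linarith
                                    positivity) hn2.le (by linarith)
  have h4 : ((2:ℝ) ^ n) ^ (-γ) = 2 ^ γ * ((2:ℝ) ^ (n + 1)) ^ (-γ) := by
    rw [pow_succ, Real.mul_rpow (by positivity) (by norm_num), Real.rpow_neg (by norm_num : (0:ℝ) ≤ 2)]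
    have : (0:ℝ) < 2 ^ γ := by positivity
    field_simp
  rw [h4]
  gcongr

lemma potter_low (N : ℝ → ℝ) (y₀ γ : ℝ) (hy₀ : 0 < y₀) (hγ : 0 ≤ γ)
    (hanti : ∀ x y, 0 < x → x ≤ y → N y ≤ N x) (hpos : ∀ x > 0, 0 < N x)
    (h : ∀ y ≥ y₀, 2 ^ (-γ) * N y ≤ N (2 * y)) :
    ∀ y ≥ y₀, ∀ x ≥ y, N y ≤ 2 ^ γ * (x / y) ^ γ * N x := by
  intro y hy x hx
  have hy0 : 0 < y := by linarith
  have hx0 : 0 < x := by linarith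
  obtain ⟨n, hn1, hn2⟩ := exists_nat_pow_near (x := x / y) (y := 2)
    ((one_le_div hy0).2 hx) (by norm_num)
  have h1 := potter_iter_low N y₀ _ hy₀ (by positivity) h (n + 1) y hy
  have h2 : N (2 ^ (n + 1) * y) ≤ N x :=
    hanti _ _ hx0 ((div_lt_iff₀ hy0).1 hn2).le
  have h3 := h1.trans h2
  rw [Real.rpow_pow_comm (by norm_num), Real.rpow_neg (by positivity),
    inv_mul_le_iff₀ (by positivity)] at h3
  refine h3.trans ?_
  have := (hpos x hx0).le
  rw [pow_succ', Real.mul_rpow (by norm_num) (by positivity)]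
  gcongr

/-- Package of the analytic facts about the tail. -/
lemma potter_pack (N : ℝ → ℝ) (α : ℝ) (h1 : 1 < α) (h2 : α < 2)
    (hanti : ∀ x y, 0 < x → x ≤ y → N y ≤ N x) (hpos : ∀ x > 0, 0 < N x)
    (hRV : Tendsto (fun x => N (2 * x) / N x) atTop (𝓝 (2 ^ (-α)))) :
    ∃ γ₁ γ₂ y₀ : ℝ, 1 < γ₁ ∧ 0 < γ₂ ∧ γ₂ < 2 ∧ 1 ≤ y₀ ∧
      (∀ y ≥ y₀, N (2 * y) ≤ 2 ^ (-γ₁) * N y) ∧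
      (∀ y ≥ y₀, ∀ x ≥ y, N x ≤ 2 ^ γ₁ * (x / y) ^ (-γ₁) * N y) ∧
      (∀ y ≥ y₀, ∀ x ≥ y, N y ≤ 2 ^ γ₂ * (x / y) ^ γ₂ * N x) := by
  have e1 : ∀ᶠ x in atTop, N (2 * x) / N x < 2 ^ (-((1 + α) / 2)) :=
    hRV.eventually (gt_mem_nhds (Real.rpow_lt_rpow_of_exponent_lt (by norm_num) (by linarith)))
  have e2 : ∀ᶠ x in atTop, 2 ^ (-((2 + α) / 2)) < N (2 * x) / N x :=
    hRV.eventually (lt_mem_nhds (Real.rpow_lt_rpow_of_exponent_lt (by norm_num) (by linarith)))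
  obtain ⟨y₁, hy₁⟩ := eventually_atTop.1 (e1.and e2)
  have hge : ∀ y ≥ max y₁ 1, 0 < y ∧ y₁ ≤ y := fun y hy =>
    ⟨lt_of_lt_of_le one_pos ((le_max_right _ _).trans hy), (le_max_left _ _).trans hy⟩
  have hA : ∀ y ≥ max y₁ 1, N (2 * y) ≤ 2 ^ (-((1 + α) / 2)) * N y := fun y hy =>
    ((div_lt_iff₀ (hpos y (hge y hy).1)).1 (hy₁ y (hge y hy).2).1).le
  have hB : ∀ y ≥ max y₁ 1, 2 ^ (-((2 + α) / 2)) * N y ≤ N (2 * y) := fun y hy =>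
    ((lt_div_iff₀ (hpos y (hge y hy).1)).1 (hy₁ y (hge y hy).2).2).le
  have h0 : 0 < max y₁ 1 := lt_of_lt_of_le one_pos (le_max_right _ _)
  exact ⟨(1 + α) / 2, (2 + α) / 2, max y₁ 1, by linarith, by linarith, by linarith,
    le_max_right _ _, hA, potter_up N _ _ h0 (by linarith) hanti hpos hA,
    potter_low N _ _ h0 (by linarith) hanti hpos hB⟩

/-- `g → ∞` -/
lemma g_atTop (N g : ℝ → ℝ) (hanti : ∀ x y, 0 < x → x ≤ y → N y ≤ N x) (hpos : ∀ x > 0, 0 < N x)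
    (hgpos : ∀ x > 0, 0 < g x) (hg : Tendsto (fun x => x * N (g x)) atTop (𝓝 1)) :
    Tendsto g atTop atTop := by
  rw [tendsto_atTop]
  intro A
  set B := max A 1 with hB
  have hB0 : 0 < B := lt_of_lt_of_le one_pos (le_max_right _ _)
  filter_upwards [hg.eventually (gt_mem_nhds (show (1:ℝ) < 2 by norm_num)), eventually_gt_atTop 0,
    eventually_gt_atTop (2 / N B)] with x hx hx0 hx1
  by_contra hcon
  have h1 : g x ≤ B := (not_le.1 hcon).le.trans (le_max_left _ _)
  have h2 := hanti _ _ (hgpos x hx0) h1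
  have h3 := (div_lt_iff₀ (hpos B hB0)).1 hx1
  nlinarith

lemma g_sq (N g : ℝ → ℝ) (y₀ γ₂ : ℝ) (hy₀ : 1 ≤ y₀) (hγ : γ₂ < 2) (hpos : ∀ x > 0, 0 < N x)
    (hlow : ∀ y ≥ y₀, ∀ x ≥ y, N y ≤ 2 ^ γ₂ * (x / y) ^ γ₂ * N x)
    (hgt : Tendsto g atTop atTop) (hg : Tendsto (fun x => x * N (g x)) atTop (𝓝 1)) :
    Tendsto (fun t => t / (g t) ^ 2) atTop (𝓝 0) := by
  set D := 2 * (2 ^ γ₂ * (1 / y₀) ^ γ₂) / N y₀ with hD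
  have hN0 := hpos y₀ (by linarith)
  have hlim : Tendsto (fun t => D * (g t) ^ (-(2 - γ₂))) atTop (𝓝 0) := by
    have := ((tendsto_rpow_neg_atTop (show 0 < 2 - γ₂ by linarith)).comp hgt).const_mul D
    simpa using this
  refine squeeze_zero' ?_ ?_ hlim
  · filter_upwards [eventually_ge_atTop 0] with t ht
    positivity
  · filter_upwards [hg.eventually (gt_mem_nhds (show (1:ℝ) < 2 by norm_num)), eventually_gt_atTop 0,
      hgt.eventually (eventually_ge_atTop y₀)] with t ht ht0 hgy
    have hgp : 0 < g t := by linarith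
    have h1 := hlow y₀ le_rfl (g t) hgy
    have e : (g t / y₀) ^ γ₂ = (1 / y₀) ^ γ₂ * (g t) ^ γ₂ := by
      rw [← Real.mul_rpow (by positivity) hgp.le]; congr 1; ring
    rw [e] at h1
    have e2 : (g t) ^ (-(2 - γ₂)) = (g t) ^ γ₂ / (g t) ^ 2 := by
      rw [show -(2 - γ₂) = γ₂ - 2 by ring, Real.rpow_sub hgp]; norm_num
    rw [e2, hD, ← mul_div_assoc]
    gcongr
    rw [div_mul_eq_mul_div, le_div_iff₀ hN0]
    have h3 : (0:ℝ) ≤ 2 ^ γ₂ * (1 / y₀) ^ γ₂ * (g t) ^ γ₂ := by positivity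
    calc t * N y₀ ≤ t * (2 ^ γ₂ * ((1 / y₀) ^ γ₂ * g t ^ γ₂) * N (g t)) := by gcongr
      _ = (2 ^ γ₂ * (1 / y₀) ^ γ₂ * g t ^ γ₂) * (t * N (g t)) := by ring
      _ ≤ (2 ^ γ₂ * (1 / y₀) ^ γ₂ * g t ^ γ₂) * 2 := by gcongr
      _ = _ := by ring

lemma g_lin (N g : ℝ → ℝ) (y₀ γ₁ : ℝ) (hy₀ : 1 ≤ y₀) (hγ : 1 < γ₁) (hpos : ∀ x > 0, 0 < N x)
    (hup : ∀ y ≥ y₀, ∀ x ≥ y, N x ≤ 2 ^ γ₁ * (x / y) ^ (-γ₁) * N y)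
    (hgt : Tendsto g atTop atTop) (hg : Tendsto (fun x => x * N (g x)) atTop (𝓝 1)) :
    ∃ c > 0, ∀ᶠ t in atTop, c * g t ≤ t := by
  have hN0 := hpos y₀ (by linarith)
  refine ⟨1 / (2 * (2 ^ γ₁ * y₀ * N y₀)), by positivity, ?_⟩
  filter_upwards [hg.eventually (lt_mem_nhds (show (1/2:ℝ) < 1 by norm_num)), eventually_gt_atTop 0,
      hgt.eventually (eventually_ge_atTop y₀)] with t ht ht0 hgy
  have hgp : 0 < g t := by linarith
  have h1 := hup y₀ le_rfl (g t) hgy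
  have h2 : (g t / y₀) ^ (-γ₁) ≤ (g t / y₀) ^ (-1 : ℝ) :=
    Real.rpow_le_rpow_of_exponent_le ((one_le_div (by linarith)).2 hgy) (by linarith)
  rw [Real.rpow_neg_one, inv_div] at h2
  have h3 : N (g t) ≤ 2 ^ γ₁ * (y₀ / g t) * N y₀ := h1.trans (by gcongr)
  have h4 : 1 / 2 < t * (2 ^ γ₁ * (y₀ / g t) * N y₀) := ht.trans_le (by gcongr)
  rw [show t * (2 ^ γ₁ * (y₀ / g t) * N y₀) = (t * (2 ^ γ₁ * y₀ * N y₀)) / g t by ring,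
    lt_div_iff₀ hgp] at h4
  rw [div_mul_eq_mul_div, div_le_iff₀ (by positivity)]
  nlinarith


lemma measurable_tail (ν : Measure ℝ) : Measurable (fun y : ℝ => (ν (Iic (-y))).toReal) := by
  refine Measurable.ennreal_toReal (Antitone.measurable ?_)
  intro x y hxy
  exact measure_mono (Iic_subset_Iic.2 (by linarith))

lemma main_part (N g : ℝ → ℝ) (hNm : Measurable N) (α y₀ γ₁ γ₂ : ℝ) (h1 : 1 < α) (h2 : α < 2)
    (hy₀ : 1 ≤ y₀) (hγ₁ : 1 < γ₁)
    (hγ₂ : γ₂ < 2) (hpos : ∀ x > 0, 0 < N x)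
    (hRV : ∀ c : ℝ, 0 < c → Tendsto (fun x => N (c * x) / N x) atTop (𝓝 (c ^ (-α))))
    (hup : ∀ y ≥ y₀, ∀ x ≥ y, N x ≤ 2 ^ γ₁ * (x / y) ^ (-γ₁) * N y)
    (hlow : ∀ y ≥ y₀, ∀ x ≥ y, N y ≤ 2 ^ γ₂ * (x / y) ^ γ₂ * N x)
    (hgt : Tendsto g atTop atTop) (hg : Tendsto (fun x => x * N (g x)) atTop (𝓝 1))
    (u : ℝ) (hu : u ≠ 0) :
    Tendsto (fun t : ℝ => (t : ℂ) * ∫ y in Ioi y₀, (Complex.I * ((u / g t : ℝ) : ℂ)) *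
      (1 - Complex.exp (-((Complex.I * ((u / g t : ℝ) : ℂ)) * y))) * (N y : ℂ)) atTop
      (𝓝 ((Complex.I * u) * (((Real.Gamma (2 - α) / (α - 1) : ℝ) : ℂ) *
        (Complex.I * u) ^ ((α - 1 : ℝ) : ℂ)))) := by
  rw [← J_formula α h1 h2 u hu, ← integral_const_mul]
  have hDCT : Tendsto (fun t : ℝ => ∫ s in Ioi (0:ℝ), (Complex.I * u) *
      ((1 - Complex.exp (-((Complex.I * u) * s))) *
        (((if y₀ < g t * s then t * N (g t * s) else 0 : ℝ)) : ℂ))) atTop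
      (𝓝 (∫ s in Ioi (0:ℝ), (Complex.I * u) *
      ((1 - Complex.exp (-((Complex.I * u) * s))) * ((s ^ (-α) : ℝ) : ℂ)))) := by
    refine tendsto_integral_filter_of_dominated_convergence _ ?_ ?_
      (dom_integrable (u ^ 2 * (2 * 2 ^ γ₂)) (2 * |u| * (2 * 2 ^ γ₁)) γ₁ γ₂ hγ₁ hγ₂) ?_
    · refine Eventually.of_forall fun t => ?_
      have : Measurable (fun s : ℝ => (if y₀ < g t * s then t * N (g t * s) else 0 : ℝ)) :=
        Measurable.ite (measurableSet_lt measurable_const (by fun_prop)) (by fun_prop)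
          measurable_const
      exact (by fun_prop : Measurable _).aestronglyMeasurable
    · filter_upwards [hg.eventually (gt_mem_nhds (show (1:ℝ) < 2 by norm_num)),
        eventually_gt_atTop 0, hgt.eventually (eventually_ge_atTop y₀)] with t ht ht0 hgy
      have hgp : 0 < g t := by linarith
      filter_upwards [ae_restrict_mem measurableSet_Ioi] with s hs
      have hs' : 0 < s := hs
      rw [← mul_assoc, norm_mul, Complex.norm_real]
      by_cases hc : y₀ < g t * s
      · rw [if_pos hc]
        have hgs : 0 < g t * s := by positivity
        have hNp := hpos _ hgs
        have hNg := hpos _ hgp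
        rw [Real.norm_of_nonneg (by positivity)]
        split_ifs with hs1
        · have hb := kernel_bound u s hs'
          have hN := hlow (g t * s) hc.le (g t) (by nlinarith)
          have e : g t / (g t * s) = s⁻¹ := by field_simp
          rw [e, Real.inv_rpow hs'.le] at hN
          have hN2 : t * N (g t * s) ≤ 2 * 2 ^ γ₂ * (s ^ γ₂)⁻¹ := by
            calc t * N (g t * s) ≤ t * (2 ^ γ₂ * (s ^ γ₂)⁻¹ * N (g t)) := by gcongr
              _ = (2 ^ γ₂ * (s ^ γ₂)⁻¹) * (t * N (g t)) := by ring
              _ ≤ (2 ^ γ₂ * (s ^ γ₂)⁻¹) * 2 := by gcongr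
              _ = _ := by ring
          have e3 : s ^ (1 - γ₂) = s * (s ^ γ₂)⁻¹ := by
            rw [Real.rpow_sub hs', Real.rpow_one, div_eq_mul_inv]
          rw [e3]
          calc _ ≤ (u ^ 2 * s) * (2 * 2 ^ γ₂ * (s ^ γ₂)⁻¹) := by gcongr
            _ = _ := by ring
        · have hb := kernel_bound2 u s
          have hN := hup (g t) hgy (g t * s) (by nlinarith)
          have e : g t * s / g t = s := by field_simp
          rw [e] at hN
          have hN2 : t * N (g t * s) ≤ 2 * 2 ^ γ₁ * s ^ (-γ₁) := by
            calc t * N (g t * s) ≤ t * (2 ^ γ₁ * s ^ (-γ₁) * N (g t)) := by gcongr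
              _ = (2 ^ γ₁ * s ^ (-γ₁)) * (t * N (g t)) := by ring
              _ ≤ (2 ^ γ₁ * s ^ (-γ₁)) * 2 := by gcongr
              _ = _ := by ring
          calc _ ≤ (2 * |u|) * (2 * 2 ^ γ₁ * s ^ (-γ₁)) := by gcongr
            _ = _ := by ring
      · rw [if_neg hc]
        simp only [norm_zero, mul_zero]
        split_ifs <;> positivity
    · filter_upwards [ae_restrict_mem measurableSet_Ioi] with s hs
      have hs' : 0 < s := hs
      refine Tendsto.const_mul _ (Tendsto.const_mul _ ?_)
      refine (Complex.continuous_ofReal.tendsto _).comp ?_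
      have hlim := hg.mul ((hRV s hs').comp hgt)
      rw [one_mul] at hlim
      refine hlim.congr' ?_
      filter_upwards [hgt.eventually (eventually_gt_atTop (y₀ / s)),
        hgt.eventually (eventually_gt_atTop 0)] with t ht hgp
      rw [if_pos ((div_lt_iff₀ hs').1 ht)]
      have := (hpos _ hgp).ne'
      simp only [Function.comp]
      rw [mul_comm s]
      field_simp
  refine hDCT.congr' ?_
  filter_upwards [hgt.eventually (eventually_gt_atTop 0)] with t hgp
  set F : ℝ → ℂ := (Ioi y₀).indicator (fun y : ℝ => (Complex.I * ((u / g t : ℝ) : ℂ)) *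
      (1 - Complex.exp (-((Complex.I * ((u / g t : ℝ) : ℂ)) * y))) * (N y : ℂ)) with hF
  have hs := integral_comp_mul_left_Ioi F 0 hgp
  rw [mul_zero] at hs
  have hset : Ioi (0:ℝ) ∩ Ioi y₀ = Ioi y₀ :=
    inter_eq_right.2 (Ioi_subset_Ioi (by linarith))
  have h3 : ∫ y in Ioi (0:ℝ), F y = ∫ y in Ioi y₀, (Complex.I * ((u / g t : ℝ) : ℂ)) *
      (1 - Complex.exp (-((Complex.I * ((u / g t : ℝ) : ℂ)) * y))) * (N y : ℂ) := by
    rw [hF, setIntegral_indicator measurableSet_Ioi, hset]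
  have hgne : (g t : ℂ) ≠ 0 := by exact_mod_cast hgp.ne'
  have h4 : ∫ y in Ioi (0:ℝ), F y = (g t : ℂ) * ∫ x in Ioi (0:ℝ), F (g t * x) := by
    rw [hs, Complex.real_smul]
    push_cast
    field_simp
  rw [← h3, h4, ← integral_const_mul, ← integral_const_mul]
  refine setIntegral_congr_fun measurableSet_Ioi fun s hs => ?_
  simp only [hF, indicator, mem_Ioi]
  have e : Complex.I * ((u / g t : ℝ) : ℂ) * ((g t * s : ℝ) : ℂ) = Complex.I * u * s := by
    push_cast; field_simp
  rw [e]
  split_ifs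
  · push_cast
    field_simp
  · simp

lemma small_part (ν : Measure ℝ) [SigmaFinite ν]
    (hI : Integrable (fun z : ℝ => min (z ^ 2) |z|) ν) (g : ℝ → ℝ) (y₀ : ℝ) (hy₀ : 1 ≤ y₀)
    (hsq : Tendsto (fun t => t / (g t) ^ 2) atTop (𝓝 0)) (u : ℝ) :
    Tendsto (fun t : ℝ => (t : ℂ) * ∫ y in Ioc 0 y₀, (Complex.I * ((u / g t : ℝ) : ℂ)) *
      (1 - Complex.exp (-((Complex.I * ((u / g t : ℝ) : ℂ)) * y))) *
        ((ν (Iic (-y))).toReal : ℂ)) atTop (𝓝 0) := by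
  have hfi := (fubini_tail ν hI (fun y : ℝ => ((min 1 y : ℝ) : ℂ)) (by fun_prop) 1 (by
    intro y hy
    rw [Complex.norm_real, Real.norm_of_nonneg (by positivity), one_mul])).2.1
  have hint : IntegrableOn (fun y : ℝ => min 1 y * (ν (Iic (-y))).toReal) (Ioi 0) := by
    have := hfi.re
    refine this.congr (Eventually.of_forall fun y => ?_)
    simp only [← Complex.ofReal_mul]
    simp
  have hint2 := (hint.mono_set (Ioc_subset_Ioi_self : Ioc 0 y₀ ⊆ Ioi 0))
  set C := ∫ y in Ioc 0 y₀, min 1 y * (ν (Iic (-y))).toReal with hC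
  rw [tendsto_zero_iff_norm_tendsto_zero]
  have hlim : Tendsto (fun t => (t / (g t) ^ 2) * (u ^ 2 * y₀ * C)) atTop (𝓝 0) := by
    simpa using hsq.mul_const (u ^ 2 * y₀ * C)
  refine squeeze_zero' (Eventually.of_forall fun _ => norm_nonneg _) ?_ hlim
  filter_upwards [eventually_ge_atTop 0] with t ht
  rw [norm_mul, Complex.norm_real, Real.norm_of_nonneg ht]
  have hb := norm_integral_le_of_norm_le (hint2.const_mul ((u / g t) ^ 2 * y₀))
    (f := fun y : ℝ => (Complex.I * ((u / g t : ℝ) : ℂ)) *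
      (1 - Complex.exp (-((Complex.I * ((u / g t : ℝ) : ℂ)) * y))) *
        ((ν (Iic (-y))).toReal : ℂ)) (by
      filter_upwards [ae_restrict_mem measurableSet_Ioc] with y hy
      rw [norm_mul, Complex.norm_real, Real.norm_of_nonneg (by positivity), ← mul_assoc]
      gcongr
      refine (kernel_bound _ y hy.1).trans ?_
      rw [mul_assoc]
      gcongr
      rcases le_total 1 y with h | h
      · rw [min_eq_left h]; linarith [hy.2]
      · rw [min_eq_right h]; nlinarith [hy.1])
  rw [integral_const_mul, ← hC] at hb
  calc _ ≤ t * ((u / g t) ^ 2 * y₀ * C) := by gcongr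
    _ = _ := by ring

lemma pointwise_limit (ν : Measure ℝ) [SigmaFinite ν] (σ : ℝ)
    (hI : Integrable (fun z : ℝ => min (z ^ 2) |z|) ν) (g : ℝ → ℝ)
    (α y₀ γ₁ γ₂ : ℝ) (h1 : 1 < α) (h2 : α < 2)
    (hy₀ : 1 ≤ y₀) (hγ₁ : 1 < γ₁)
    (hγ₂ : γ₂ < 2) (N : ℝ → ℝ) (hN : N = fun y => (ν (Iic (-y))).toReal)
    (hpos : ∀ x > 0, 0 < N x)
    (hRV : ∀ c : ℝ, 0 < c → Tendsto (fun x => N (c * x) / N x) atTop (𝓝 (c ^ (-α))))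
    (hup : ∀ y ≥ y₀, ∀ x ≥ y, N x ≤ 2 ^ γ₁ * (x / y) ^ (-γ₁) * N y)
    (hlow : ∀ y ≥ y₀, ∀ x ≥ y, N y ≤ 2 ^ γ₂ * (x / y) ^ γ₂ * N x)
    (hgt : Tendsto g atTop atTop) (hg : Tendsto (fun x => x * N (g x)) atTop (𝓝 1))
    (u : ℝ) (hu : u ≠ 0) :
    Tendsto (fun t : ℝ => (t : ℂ) * charExponent σ ν (u / g t)) atTop
      (𝓝 ((Complex.I * u) * (((Real.Gamma (2 - α) / (α - 1) : ℝ) : ℂ) *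
        (Complex.I * u) ^ ((α - 1 : ℝ) : ℂ)))) := by
  have hsq := g_sq N g y₀ γ₂ hy₀ hγ₂ hpos hlow hgt hg
  have hA := small_part ν hI g y₀ hy₀ hsq u
  have hB := main_part N g (hN ▸ measurable_tail ν) α y₀ γ₁ γ₂ h1 h2 hy₀ hγ₁ hγ₂ hpos hRV hup hlow
    hgt hg u hu
  have hC : Tendsto (fun t => ((-(σ ^ 2 * u ^ 2) / 2 * (t / (g t) ^ 2) : ℝ) : ℂ)) atTop (𝓝 0) := by
    have := (Complex.continuous_ofReal.tendsto _).comp (hsq.const_mul (-(σ ^ 2 * u ^ 2) / 2))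
    simpa [Function.comp_def] using this
  have hall := (hC.add hA).add hB
  rw [add_zero, zero_add] at hall
  refine hall.congr fun t => ?_
  obtain ⟨-, hr1, hr2⟩ := psi_repr ν hI (u / g t)
  rw [charExponent, hr2, ← Ioc_union_Ioi_eq_Ioi (show (0:ℝ) ≤ y₀ by linarith),
    setIntegral_union (Ioc_disjoint_Ioi le_rfl) measurableSet_Ioi
      (hr1.mono_set Ioc_subset_Ioi_self) (hr1.mono_set (Ioi_subset_Ioi (by linarith))), hN]
  push_cast
  ring


lemma sq_integrableOn (ν : Measure ℝ) (hI : Integrable (fun z : ℝ => min (z ^ 2) |z|) ν) (x : ℝ) :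
    IntegrableOn (fun z : ℝ => z ^ 2) (Ioo (-x) 0) ν := by
  refine Integrable.mono' ((hI.const_mul (max 1 x)).restrict (s := Ioo (-x) 0))
    (by fun_prop : Measurable _).aestronglyMeasurable ?_
  filter_upwards [ae_restrict_mem measurableSet_Ioo] with z hz
  have hx : |z| ≤ x := by rw [abs_of_neg hz.2]; linarith [hz.1]
  rw [Real.norm_of_nonneg (by positivity)]
  have h1 : (1:ℝ) ≤ max 1 x := le_max_left _ _
  have h2 : x ≤ max 1 x := le_max_right _ _
  rcases le_total (z ^ 2) |z| with h | h
  · rw [min_eq_left h]; nlinarith [sq_nonneg z]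
  · rw [min_eq_right h, ← sq_abs]; nlinarith [abs_nonneg z]

/-- truncated second moment -/
noncomputable def truncV (ν : Measure ℝ) (x : ℝ) : ℝ := ∫ z in Ioo (-x) (0:ℝ), z ^ 2 ∂ν

lemma truncV_eq (ν : Measure ℝ) (x : ℝ) :
    (∫⁻ z in Ioo (-x) (0 : ℝ), ENNReal.ofReal (z ^ 2) ∂ν).toReal = truncV ν x := by
  rw [truncV, integral_eq_lintegral_of_nonneg_ae (Eventually.of_forall fun z => sq_nonneg z)
    (by fun_prop : Measurable _).aestronglyMeasurable]

lemma truncV_nonneg (ν : Measure ℝ) (x : ℝ) : 0 ≤ truncV ν x :=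
  integral_nonneg fun z => sq_nonneg z

lemma truncV_mono (ν : Measure ℝ) (hI : Integrable (fun z : ℝ => min (z ^ 2) |z|) ν) (x y : ℝ)
    (hxy : x ≤ y) : truncV ν x ≤ truncV ν y :=
  setIntegral_mono_set (sq_integrableOn ν hI y) (Eventually.of_forall fun z => sq_nonneg z)
    (Ioo_subset_Ioo_left (by linarith)).eventuallyLE

lemma re_psi (ν : Measure ℝ) [SigmaFinite ν] (σ : ℝ)
    (hI : Integrable (fun z : ℝ => min (z ^ 2) |z|) ν) (l : ℝ) :
    (charExponent σ ν l).re ≤ -(2 / Real.pi ^ 2 * l ^ 2 * truncV ν (1 / |l|)) := by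
  obtain ⟨hr, -, -⟩ := psi_repr ν hI l
  have hre : (∫ z in Iio (0 : ℝ), (Complex.exp (Complex.I * l * z) - 1 - Complex.I * l * z) ∂ν).re =
      ∫ z in Iio (0 : ℝ), (Real.cos (l * z) - 1) ∂ν := by
    have := integral_re hr
    simp only [RCLike.re_eq_complex_re] at this
    rw [← this]
    congr 1
    ext z
    have e : Complex.I * l * z = ((l * z : ℝ) : ℂ) * Complex.I := by push_cast; ring
    rw [e, Complex.sub_re, Complex.sub_re, Complex.exp_ofReal_mul_I_re]
    simp
  have hcosI : IntegrableOn (fun z : ℝ => 1 - Real.cos (l * z)) (Iio 0) ν := by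
    have := hr.re.neg
    refine this.congr (Eventually.of_forall fun z => ?_)
    have e : Complex.I * l * z = ((l * z : ℝ) : ℂ) * Complex.I := by push_cast; ring
    simp only [Pi.neg_apply, RCLike.re_eq_complex_re]
    rw [e, Complex.sub_re, Complex.sub_re, Complex.exp_ofReal_mul_I_re]
    simp
  have hneg : ∫ z in Iio (0 : ℝ), (Real.cos (l * z) - 1) ∂ν =
      -∫ z in Iio (0 : ℝ), (1 - Real.cos (l * z)) ∂ν := by
    rw [← integral_neg]
    congr 1
    ext z
    ring
  have hsub : Ioo (-(1 / |l|)) (0:ℝ) ⊆ Iio 0 := fun z hz => hz.2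
  have hmain : 2 / Real.pi ^ 2 * l ^ 2 * truncV ν (1 / |l|) ≤
      ∫ z in Iio (0 : ℝ), (1 - Real.cos (l * z)) ∂ν := by
    rw [truncV, ← integral_const_mul]
    refine le_trans ?_ (setIntegral_mono_set hcosI
      (Eventually.of_forall fun z => by simp [Real.cos_le_one]) hsub.eventuallyLE)
    refine setIntegral_mono_on ((sq_integrableOn ν hI _).const_mul _) (hcosI.mono_set hsub)
      measurableSet_Ioo fun z hz => ?_
    have hz2 : |z| ≤ 1 / |l| := by rw [abs_of_neg hz.2]; linarith [hz.1]
    have hlz : |l * z| ≤ Real.pi := by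
      rw [abs_mul]
      have : |l| * |z| ≤ 1 := by
        calc |l| * |z| ≤ |l| * (1 / |l|) := by gcongr
          _ ≤ 1 := by rw [mul_one_div]; exact div_self_le_one _
      linarith [Real.pi_gt_three]
    have := Real.cos_le_one_sub_mul_cos_sq hlz
    rw [mul_pow] at this
    linarith
  rw [charExponent, Complex.add_re, hre, hneg, Complex.ofReal_re]
  have : 0 ≤ σ ^ 2 * l ^ 2 := by positivity
  linarith

lemma truncV_large (ν : Measure ℝ) (hI : Integrable (fun z : ℝ => min (z ^ 2) |z|) ν)
    (y : ℝ) (hy : 0 < y) :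
    (y / 2) ^ 2 * ((ν (Iic (-(y / 2)))).toReal - (ν (Iic (-y))).toReal) ≤ truncV ν y := by
  have hsub : Ioc (-y) (-(y / 2)) ⊆ Ioo (-y) 0 := fun z hz => ⟨hz.1, by linarith [hz.2]⟩
  have h1 : ∫ z in Ioc (-y) (-(y / 2)), z ^ 2 ∂ν ≤ truncV ν y :=
    setIntegral_mono_set (sq_integrableOn ν hI y) (Eventually.of_forall fun z => sq_nonneg z)
      hsub.eventuallyLE
  have hfin := tail_lt_top ν hI (y / 2) (by linarith)
  have hfin2 := tail_lt_top ν hI y hy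
  have hIoc : ν (Ioc (-y) (-(y / 2))) < ⊤ :=
    (measure_mono (fun z hz => hz.2)).trans_lt hfin
  have hmeas : ν.real (Ioc (-y) (-(y / 2))) = (ν (Iic (-(y / 2)))).toReal - (ν (Iic (-y))).toReal := by
    have hu : Iic (-(y / 2)) \ Iic (-y) = Ioc (-y) (-(y / 2)) := by
      ext z
      simp only [Set.mem_sdiff, mem_Iic, mem_Ioc, not_le]
      tauto
    rw [← hu, measureReal_def, measure_sdiff (Iic_subset_Iic.2 (by linarith))
      measurableSet_Iic.nullMeasurableSet hfin2.ne, ENNReal.toReal_sub_of_le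
      (measure_mono (Iic_subset_Iic.2 (by linarith))) hfin.ne]
  rw [← hmeas]
  refine le_trans ?_ h1
  have h2 : ∫ z in Ioc (-y) (-(y / 2)), (y / 2) ^ 2 ∂ν = (y / 2) ^ 2 * ν.real (Ioc (-y) (-(y / 2))) := by
    rw [setIntegral_const, smul_eq_mul, mul_comm]
  rw [← h2]
  refine setIntegral_mono_on (integrableOn_const hIoc.ne) ((sq_integrableOn ν hI y).mono_set hsub)
    measurableSet_Ioc fun z hz => ?_
  nlinarith [hz.2]

lemma truncV_small (ν : Measure ℝ) (hI : Integrable (fun z : ℝ => min (z ^ 2) |z|) ν)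
    (β : ℝ) (hβ1 : 1 < β)
    (hliminf : 0 < Filter.liminf (fun x => x ^ (β - 2) * truncV ν x) (𝓝[>] (0:ℝ)))
    (Y : ℝ) (hY : 0 < Y) : ∃ c > 0, ∀ x, 0 < x → x ≤ Y → c * x ≤ truncV ν x := by
  rw [liminf_eq] at hliminf
  obtain ⟨a, ha, ha0⟩ : ∃ a ∈ {a | ∀ᶠ x in 𝓝[>] (0:ℝ), a ≤ x ^ (β - 2) * truncV ν x}, 0 < a := by
    refine exists_lt_of_lt_csSup ⟨0, ?_⟩ hliminf
    filter_upwards [self_mem_nhdsWithin] with x hx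
    have hx' : (0:ℝ) < x := hx
    have := truncV_nonneg ν x
    positivity
  obtain ⟨x₁, hx₁, hx₁'⟩ := mem_nhdsGT_iff_exists_Ioc_subset.1 ha
  have hx₁0 : 0 < x₁ := hx₁
  have key : ∀ x, 0 < x → x ≤ x₁ → a * x₁ ^ (1 - β) * x ≤ truncV ν x := by
    intro x hx hxx
    have h1 : a ≤ x ^ (β - 2) * truncV ν x := hx₁' ⟨hx, hxx⟩
    have h2 : x₁ ^ (1 - β) ≤ x ^ (1 - β) := Real.rpow_le_rpow_of_nonpos hx hxx (by linarith)
    have h3 : x ^ (1 - β) * x * x ^ (β - 2) = 1 := by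
      have : x ^ (1 - β) * x = x ^ (2 - β) := by
        rw [show 2 - β = (1 - β) + 1 by ring, Real.rpow_add_one hx.ne']
      rw [this, ← Real.rpow_add hx]
      simp
    calc a * x₁ ^ (1 - β) * x ≤ (x ^ (β - 2) * truncV ν x) * x ^ (1 - β) * x := by
          have h0 := ha0.le.trans h1
          gcongr
      _ = (x ^ (1 - β) * x * x ^ (β - 2)) * truncV ν x := by ring
      _ = _ := by rw [h3, one_mul]
  have hV1 : 0 < truncV ν x₁ := lt_of_lt_of_le (by positivity) (key x₁ hx₁0 le_rfl)
  refine ⟨min (a * x₁ ^ (1 - β)) (truncV ν x₁ / Y), by positivity, fun x hx hxY => ?_⟩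
  rcases le_total x x₁ with h | h
  · refine le_trans ?_ (key x hx h)
    gcongr
    exact min_le_left _ _
  · refine le_trans ?_ (truncV_mono ν hI _ _ h)
    calc _ ≤ (truncV ν x₁ / Y) * x := by gcongr; exact min_le_right _ _
      _ ≤ (truncV ν x₁ / Y) * Y := by gcongr
      _ = _ := by field_simp

lemma domination (ν : Measure ℝ) [SigmaFinite ν] (σ : ℝ)
    (hI : Integrable (fun z : ℝ => min (z ^ 2) |z|) ν) (g : ℝ → ℝ)
    (y₀ γ₁ β : ℝ) (hβ : 1 < β)
    (hliminf : 0 < Filter.liminf (fun x => x ^ (β - 2) * truncV ν x) (𝓝[>] (0:ℝ)))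
    (hy₀ : 1 ≤ y₀) (hγ₁ : 1 < γ₁)
    (N : ℝ → ℝ) (hN : N = fun y => (ν (Iic (-y))).toReal)
    (hpos : ∀ x > 0, 0 < N x)
    (hdbl : ∀ y ≥ y₀, N (2 * y) ≤ 2 ^ (-γ₁) * N y)
    (hup : ∀ y ≥ y₀, ∀ x ≥ y, N x ≤ 2 ^ γ₁ * (x / y) ^ (-γ₁) * N y)
    (hgt : Tendsto g atTop atTop) (hg : Tendsto (fun x => x * N (g x)) atTop (𝓝 1)) :
    ∃ c > 0, ∀ᶠ t in atTop, ∀ u : ℝ, t * (charExponent σ ν (u / g t)).re ≤ c - c * |u| := by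
  obtain ⟨c₁, hc₁, hV1⟩ := truncV_small ν hI β hβ hliminf (2 * y₀) (by linarith)
  obtain ⟨c₂, hc₂, hlin⟩ := g_lin N g y₀ γ₁ hy₀ hγ₁ hpos hup hgt hg
  have hpi := Real.pi_pos
  set k := 2 / Real.pi ^ 2 with hk
  have hk0 : 0 < k := by positivity
  set d : ℝ := (1 / 2) / ((2:ℝ) ^ γ₁) with hd
  have hd0 : 0 < d := by positivity
  have hVlarge : ∀ y ≥ 2 * y₀, y ^ 2 / 4 * N y ≤ truncV ν y := by
    intro y hy
    have hyp : 0 < y := by linarith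
    have h1 := truncV_large ν hI y hyp
    have h2 := hdbl (y / 2) (by linarith)
    rw [mul_div_cancel₀ _ (by norm_num : (2:ℝ) ≠ 0)] at h2
    have h3 : (2:ℝ) ^ (-γ₁) ≤ 1 / 2 := by
      calc (2:ℝ) ^ (-γ₁) ≤ 2 ^ (-1 : ℝ) :=
            Real.rpow_le_rpow_of_exponent_le (by norm_num) (by linarith)
        _ = 1 / 2 := by rw [Real.rpow_neg_one]; norm_num
    have h4 := hpos (y / 2) (by linarith)
    have h5 : 2 * N y ≤ N (y / 2) := by nlinarith
    have h6 : N y ≤ (ν (Iic (-(y / 2)))).toReal - (ν (Iic (-y))).toReal := by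
      have : N (y / 2) = (ν (Iic (-(y / 2)))).toReal := by rw [hN]
      rw [← this]
      have : N y = (ν (Iic (-y))).toReal := by rw [hN]
      rw [← this]
      linarith
    refine le_trans ?_ h1
    calc y ^ 2 / 4 * N y = (y / 2) ^ 2 * N y := by ring
      _ ≤ _ := by gcongr
  set c := min (k * (1 / 4 * d)) (k * (c₁ * c₂)) with hc
  have hc0 : 0 < c := by positivity
  refine ⟨c, hc0, ?_⟩
  filter_upwards [hlin, hg.eventually (lt_mem_nhds (show (1/2:ℝ) < 1 by norm_num)),
    eventually_gt_atTop 0, hgt.eventually (eventually_ge_atTop y₀)] with t hl ht ht0 hgy u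
  have hgp : 0 < g t := by linarith
  have hre := re_psi ν σ hI (u / g t)
  rw [← hk] at hre
  rcases le_total |u| 1 with hu1 | hu1
  · have h1 : 0 ≤ k * (u / g t) ^ 2 * truncV ν (1 / |u / g t|) := by
      have := truncV_nonneg ν (1 / |u / g t|)
      positivity
    nlinarith
  · have hu0 : 0 < |u| := by linarith
    have e : 1 / |u / g t| = g t / |u| := by
      rw [abs_div, abs_of_pos hgp, one_div_div]
    rw [e] at hre
    set y := g t / |u| with hy
    have hyp : 0 < y := by positivity
    have e2 : (u / g t) ^ 2 = (y ^ 2)⁻¹ := by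
      rw [hy, div_pow, div_pow, sq_abs, inv_div]
    rw [e2] at hre
    suffices h : c * |u| ≤ t * (k * (y ^ 2)⁻¹ * truncV ν y) by nlinarith
    rcases le_total y (2 * y₀) with hyy | hyy
    · have hV := hV1 y hyp hyy
      have h1 : c₁ * c₂ * |u| ≤ t * ((y ^ 2)⁻¹ * truncV ν y) := by
        calc c₁ * c₂ * |u| = c₁ * (c₂ * g t) * (|u| / g t) := by field_simp
          _ ≤ c₁ * t * (|u| / g t) := by gcongr
          _ = t * ((y ^ 2)⁻¹ * (c₁ * y)) := by rw [hy]; field_simp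
          _ ≤ _ := by gcongr
      calc c * |u| ≤ k * (c₁ * c₂) * |u| := by gcongr; exact min_le_right _ _
        _ = k * (c₁ * c₂ * |u|) := by ring
        _ ≤ k * (t * ((y ^ 2)⁻¹ * truncV ν y)) := by gcongr
        _ = _ := by ring
    · have hV := hVlarge y hyy
      have hyg : y ≤ g t := by rw [hy]; exact div_le_self hgp.le hu1
      have h1 := hup y (by linarith) (g t) hyg
      have e3 : g t / y = |u| := by rw [hy]; field_simp
      rw [e3] at h1
      have h2 : |u| ^ (-γ₁) ≤ |u| ^ (-1 : ℝ) :=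
        Real.rpow_le_rpow_of_exponent_le hu1 (by linarith)
      rw [Real.rpow_neg_one] at h2
      have hNy := hpos y hyp
      have h3 : N (g t) ≤ 2 ^ γ₁ * |u|⁻¹ * N y := h1.trans (by gcongr)
      have h4 : d * |u| ≤ t * N y := by
        have h5 : 1 / 2 ≤ t * (2 ^ γ₁ * |u|⁻¹ * N y) := ht.le.trans (by gcongr)
        calc d * |u| = (1 / 2) * (|u| / 2 ^ γ₁) := by rw [hd]; ring
          _ ≤ (t * (2 ^ γ₁ * |u|⁻¹ * N y)) * (|u| / 2 ^ γ₁) := by gcongr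
          _ = t * N y := by field_simp
      have h6 : 1 / 4 * d * |u| ≤ t * ((y ^ 2)⁻¹ * truncV ν y) := by
        calc 1 / 4 * d * |u| = 1 / 4 * (d * |u|) := by ring
          _ ≤ 1 / 4 * (t * N y) := by gcongr
          _ = t * ((y ^ 2)⁻¹ * (y ^ 2 / 4 * N y)) := by field_simp
          _ ≤ _ := by gcongr
      calc c * |u| ≤ k * (1 / 4 * d) * |u| := by gcongr; exact min_le_left _ _
        _ = k * (1 / 4 * d * |u|) := by ring
        _ ≤ k * (t * ((y ^ 2)⁻¹ * truncV ν y)) := by gcongr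
        _ = _ := by ring


lemma measurable_charExponent (ν : Measure ℝ) [SigmaFinite ν] (σ : ℝ) :
    Measurable (charExponent σ ν) := by
  unfold charExponent
  refine Measurable.add (by fun_prop) ?_
  refine StronglyMeasurable.measurable ?_
  refine StronglyMeasurable.integral_prod_right (f := fun (l z : ℝ) =>
    Complex.exp (Complex.I * l * z) - 1 - Complex.I * l * z) ?_
  exact (by fun_prop : Measurable _).stronglyMeasurable

lemma bound_integrable (c : ℝ) (hc : 0 < c) :
    Integrable (fun u : ℝ => Real.exp (c - c * |u|)) := by
  have h1 : IntegrableOn (fun u : ℝ => Real.exp (c - c * |u|)) (Ioi 0) := by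
    refine IntegrableOn.congr_fun ((integrableOn_exp_mul_Ioi (neg_neg_of_pos hc) 0).const_mul (Real.exp c)) (fun u hu => ?_) measurableSet_Ioi
    have : (0:ℝ) < u := hu
    simp only [abs_of_pos this]
    rw [← Real.exp_add]; congr 1; ring
  have h2 : IntegrableOn (fun u : ℝ => Real.exp (c - c * |u|)) (Iic 0) := by
    refine IntegrableOn.congr_fun ((integrableOn_exp_mul_Iic hc 0).const_mul (Real.exp c)) (fun u hu => ?_) measurableSet_Iic
    have : u ≤ 0 := hu
    simp only [abs_of_nonpos this]
    rw [← Real.exp_add]; congr 1; ring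
  rw [← integrableOn_univ, ← Iic_union_Ioi (a := (0:ℝ))]
  exact h2.union h1

lemma norm_exp_le (ν : Measure ℝ) (σ t c l u : ℝ)
    (h : t * (charExponent σ ν l).re ≤ c - c * |u|) :
    ‖Complex.exp ((t : ℂ) * charExponent σ ν l)‖ ≤ Real.exp (c - c * |u|) := by
  rw [Complex.norm_exp, Complex.re_ofReal_mul]
  exact Real.exp_le_exp.2 h

lemma norm_exp_b (b l : ℝ) : ‖Complex.exp (-(Complex.I) * b * l)‖ = 1 := by
  rw [show -(Complex.I) * b * l = ((-(b * l) : ℝ) : ℂ) * Complex.I by push_cast; ring]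
  exact Complex.norm_exp_ofReal_mul_I _



/-- Key asymptotic (4.3) in the proof of Theorem 2.1 of the paper: in the stable
regime the density of `X_t` at `b` satisfies
`g(t) p(t,b) → (Γ(1+1/α)/π) ((α-1)/Γ(2-α))^{1/α} sin(π/α)`. -/
theorem density_asymptotics_stable (α β : ℝ) (hα1 : 1 < α) (hα2 : α < 2)
    (hβ1 : α ≤ β) (hβ2 : β < 2) (σ : ℝ) (hσ : 0 ≤ σ)
    (ν : MeasureTheory.Measure ℝ) [SigmaFinite ν]
    (hconc : ν (Ici (0 : ℝ)) = 0)
    (hmin : ∫⁻ z, ENNReal.ofReal (min (z ^ 2) |z|) ∂ν ≠ ⊤)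
    (htail : ∀ᶠ x in atTop, 0 < ν (Iic (-x)) ∧ ν (Iic (-x)) < ⊤)
    (hRV : ∀ c : ℝ, 0 < c →
      Tendsto (fun x => (ν (Iic (-(c * x)))).toReal / (ν (Iic (-x))).toReal)
        atTop (nhds (c ^ (-α))))
    (hliminf : 0 < Filter.liminf
      (fun x => x ^ (β - 2) * (∫⁻ z in Ioo (-x) (0 : ℝ), ENNReal.ofReal (z ^ 2) ∂ν).toReal)
      (nhdsWithin 0 (Ioi 0)))
    (g : ℝ → ℝ) (hgpos : ∀ x > 0, 0 < g x)
    (hgRV : ∀ c : ℝ, 0 < c →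
      Tendsto (fun x => g (c * x) / g x) atTop (nhds (c ^ (1 / α))))
    (hg : Tendsto (fun x => x * (ν (Iic (-g x))).toReal) atTop (nhds 1))
    (b : ℝ) :
    (∀ᶠ t : ℝ in atTop, Integrable (fun lam : ℝ => Complex.exp ((t : ℂ) * charExponent σ ν lam))) ∧
    Tendsto (fun t : ℝ => (g t : ℂ) * fourierDensity σ ν t b) atTop
      (nhds ((Real.Gamma (1 + 1 / α) / Real.pi *
          ((α - 1) / Real.Gamma (2 - α)) ^ (1 / α) * Real.sin (Real.pi / α) : ℝ) : ℂ)) := by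
  have hI := int_min ν hmin
  obtain ⟨N, hN⟩ : ∃ N : ℝ → ℝ, N = fun y => (ν (Iic (-y))).toReal := ⟨_, rfl⟩
  have hanti : ∀ x y, 0 < x → x ≤ y → N y ≤ N x := by
    intro x y hx hxy
    rw [hN]
    exact ENNReal.toReal_mono (tail_lt_top ν hI x hx).ne
      (measure_mono (Iic_subset_Iic.2 (by linarith)))
  have hpos : ∀ x > 0, 0 < N x := by
    intro x hx
    obtain ⟨y, hy, hxy⟩ := (htail.and (eventually_ge_atTop x)).exists
    refine lt_of_lt_of_le ?_ (hanti x y hx hxy)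
    rw [hN]
    exact ENNReal.toReal_pos hy.1.ne' hy.2.ne
  have hRV' : ∀ c : ℝ, 0 < c → Tendsto (fun x => N (c * x) / N x) atTop (𝓝 (c ^ (-α))) := by
    rw [hN]; exact hRV
  have hg' : Tendsto (fun x => x * N (g x)) atTop (𝓝 1) := by
    rw [hN]; exact hg
  simp only [truncV_eq] at hliminf
  obtain ⟨γ₁, γ₂, y₀, hγ₁, -, hγ₂, hy₀, hdbl, hup, hlow⟩ :=
    potter_pack N α hα1 hα2 hanti hpos (hRV' 2 (by norm_num))
  have hgt := g_atTop N g hanti hpos hgpos hg'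
  obtain ⟨c, hc, hdom⟩ := domination ν σ hI g y₀ γ₁ β (by linarith) hliminf hy₀ hγ₁ N hN hpos
    hdbl hup hgt hg'
  have hmeas := measurable_charExponent ν σ
  refine ⟨?_, ?_⟩
  · filter_upwards [hdom, eventually_gt_atTop 0] with t ht ht0
    have hgp := hgpos t ht0
    have h1 : Integrable (fun u : ℝ => Complex.exp ((t : ℂ) * charExponent σ ν (u / g t))) := by
      refine Integrable.mono' (bound_integrable c hc)
        (by fun_prop : Measurable _).aestronglyMeasurable ?_
      exact Eventually.of_forall fun u => norm_exp_le ν σ t c _ u (ht u)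
    exact (integrable_comp_div_iff (fun l : ℝ => Complex.exp ((t : ℂ) * charExponent σ ν l))
      hgp.ne').1 h1
  · set K : ℝ := Real.Gamma (2 - α) / (α - 1) with hK
    have hG : 0 < Real.Gamma (2 - α) := Real.Gamma_pos_of_pos (by linarith)
    have hK0 : 0 < K := div_pos hG (by linarith)
    have hlim : Tendsto (fun t : ℝ => ∫ u : ℝ, Complex.exp (-(Complex.I) * b * (u / g t : ℝ)) *
        Complex.exp ((t : ℂ) * charExponent σ ν (u / g t))) atTop
        (𝓝 (∫ u : ℝ, Complex.exp ((Complex.I * u) * ((K : ℂ) *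
          (Complex.I * u) ^ ((α - 1 : ℝ) : ℂ))))) := by
      refine tendsto_integral_filter_of_dominated_convergence
        (fun u : ℝ => Real.exp (c - c * |u|)) ?_ ?_ (bound_integrable c hc) ?_
      · exact Eventually.of_forall fun t => (by fun_prop : Measurable _).aestronglyMeasurable
      · filter_upwards [hdom] with t ht
        refine Eventually.of_forall fun u => ?_
        rw [norm_mul, norm_exp_b, one_mul]
        exact norm_exp_le ν σ t c _ u (ht u)
      · filter_upwards [Measure.ae_ne volume (0:ℝ)] with u hu
        have hp := pointwise_limit ν σ hI g α y₀ γ₁ γ₂ hα1 hα2 hy₀ hγ₁ hγ₂ N hN hpos hRV' hup hlow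
          hgt hg' u hu
        have hp2 := (Complex.continuous_exp.tendsto _).comp hp
        have hz : Tendsto (fun t => u / g t) atTop (𝓝 0) := hgt.const_div_atTop u
        have hcont : Continuous (fun x : ℝ => Complex.exp (-(Complex.I) * b * x)) := by fun_prop
        have hb := (hcont.tendsto 0).comp hz
        have := hb.mul hp2
        simpa [Function.comp_def, hK] using this
    rw [final_integral α K hα1 hα2 hK0] at hlim
    have hlim2 := hlim.const_mul ((1 / (2 * Real.pi) : ℝ) : ℂ)
    have hconst : ((1 / (2 * Real.pi) : ℝ) : ℂ) *
        ((2 * Real.Gamma (1 + 1 / α) * K ^ (-(1 / α)) * Real.sin (Real.pi / α) : ℝ) : ℂ) =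
        ((Real.Gamma (1 + 1 / α) / Real.pi *
          ((α - 1) / Real.Gamma (2 - α)) ^ (1 / α) * Real.sin (Real.pi / α) : ℝ) : ℂ) := by
      rw [← Complex.ofReal_mul]
      congr 1
      have e : K ^ (-(1 / α)) = ((α - 1) / Real.Gamma (2 - α)) ^ (1 / α) := by
        rw [Real.rpow_neg hK0.le, ← Real.inv_rpow hK0.le, hK, inv_div]
      rw [e]
      have := Real.pi_pos
      field_simp
    rw [hconst] at hlim2
    refine hlim2.congr' ?_
    filter_upwards [eventually_gt_atTop 0] with t ht0
    have hgp := hgpos t ht0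
    have h := Measure.integral_comp_div (fun l : ℝ => Complex.exp (-(Complex.I) * b * l) *
      Complex.exp ((t : ℂ) * charExponent σ ν l)) (g t)
    rw [h, fourierDensity, abs_of_pos hgp, Complex.real_smul]
    ring
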